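/- Let g, C, B⁻, B⁺, Ẋ, Ẏ, n_x, n_y, α be arbitrary real numbers, and suppose the interior and exterior traces satisfy the lake-at-rest conditions η⁻ = η⁺ = C, m⁻ = m⁺ = 0, w⁻ = w⁺ = 0, with water depths h± = η± − B± = C − B±. Then the well-balanced numerical flux reduces exactly to the interior flux: Ĥ* = Hn(η⁻, m⁻, w⁻, h⁻) = Hn(C, 0, 0, C − B⁻). -/

import Mathlib

/-- The ALE shallow-water flux in the variables `(η, m, w)` with water depth `h`,
dotted with the direction `(nx, ny)`, for mesh velocity `(Xd, Yd)`. -/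
noncomputable def Hflux (g Xd Yd nx ny η m w h : ℝ) : ℝ × ℝ × ℝ :=
  ( m * nx + w * ny - (Xd * nx + Yd * ny) * η,
    (m ^ 2 / h + g / 2 * (2 * h * η - η ^ 2)) * nx + m * w / h * ny - (Xd * nx + Yd * ny) * m,
    m * w / h * nx + (w ^ 2 / h + g / 2 * (2 * h * η - η ^ 2)) * ny - (Xd * nx + Yd * ny) * w )

/-! At rest only the mesh transport and the hydrostatic pressure survive in the flux, and at a fixed
surface elevation `η` the pressure is affine in the depth with slope `g * η`. The correction term is
therefore exactly the change of flux from the reconstructed depth back to the interior one. Since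
both traces are reconstructed with the same depth `max 0 (C - max Bm Bp)`, the Lax–Friedrichs flux
is consistent there, and any common depth would do. -/

/-- The Lax–Friedrichs numerical flux with dissipation speed `α`. The interior and exterior physical
fluxes `Fm`, `Fp` are passed as values rather than as a function of the states `um`, `up`, because
`Hflux` depends on the depth as well as on the conserved variables. -/
def laxFriedrichsFlux {𝕜 V : Type*} [DivisionRing 𝕜] [AddCommGroup V] [Module 𝕜 V]
    (α : 𝕜) (Fm Fp um up : V) : V :=
  (1 / 2 : 𝕜) • (Fm + Fp) - (α / 2) • (up - um)

theorem laxFriedrichsFlux_self {𝕜 V : Type*} [DivisionRing 𝕜] [NeZero (2 : 𝕜)] [AddCommGroup V]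
    [Module 𝕜 V] (α : 𝕜) (F u : V) : laxFriedrichsFlux α F F u u = F := by
  rw [laxFriedrichsFlux, sub_self, smul_zero, sub_zero, ← two_smul 𝕜 F, smul_smul,
    one_div_mul_cancel two_ne_zero, one_smul]

/-- The pressure term `g / 2 * (2 * h * η - η ^ 2)` of the shallow-water momentum flux. With
`h = η - B` it equals `g / 2 * (h ^ 2 - B ^ 2)`, but the depth is kept independent of `η` so that it
can be reconstructed at a fixed surface elevation. -/
noncomputable def hydrostaticPressure (g η h : ℝ) : ℝ :=
  g / 2 * (2 * h * η - η ^ 2)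

theorem hydrostaticPressure_sub (g η h h' : ℝ) :
    hydrostaticPressure g η h - hydrostaticPressure g η h' = g * η * (h - h') := by
  unfold hydrostaticPressure
  ring

/-- The correction `Δ*` that makes the numerical flux well balanced, for interior depth `h` and
reconstructed depth `hs`. -/
def wellBalancedCorrection (g nx ny η h hs : ℝ) : ℝ × ℝ × ℝ :=
  (0, g * η * (h - hs) * nx, g * η * (h - hs) * ny)

section AtRest

variable (g Xd Yd nx ny η h hs : ℝ)

theorem Hflux_zero_zero :
    Hflux g Xd Yd nx ny η 0 0 h =
      (-((Xd * nx + Yd * ny) * η), hydrostaticPressure g η h * nx,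
        hydrostaticPressure g η h * ny) := by
  simp [Hflux, hydrostaticPressure]

theorem Hflux_zero_zero_sub :
    Hflux g Xd Yd nx ny η 0 0 h - Hflux g Xd Yd nx ny η 0 0 hs =
      wellBalancedCorrection g nx ny η h hs := by
  simp only [Hflux_zero_zero, Prod.mk_sub_mk, sub_self, ← sub_mul, hydrostaticPressure_sub,
    wellBalancedCorrection]

theorem wellBalanced_flux_reduces_to_interior_flux_general (α : ℝ) :
    laxFriedrichsFlux α (Hflux g Xd Yd nx ny η 0 0 hs) (Hflux g Xd Yd nx ny η 0 0 hs)
        (η, 0, 0) (η, 0, 0) + wellBalancedCorrection g nx ny η h hs =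
      Hflux g Xd Yd nx ny η 0 0 h := by
  rw [laxFriedrichsFlux_self, ← Hflux_zero_zero_sub g Xd Yd, add_sub_cancel]

end AtRest

/-- At the lake-at-rest steady state, the well-balanced numerical flux `Ĥ*`
(hydrostatic reconstruction + global Lax–Friedrichs + correction term)
reduces exactly to the interior flux `Hn(C, 0, 0, C - B⁻)`. -/
theorem wellBalanced_flux_reduces_to_interior_flux
    (g C Bm Bp Xd Yd nx ny α : ℝ)
    (ηm ηp mm mp wm wp hm hp : ℝ)
    (hηm : ηm = C) (hηp : ηp = C)
    (hmm : mm = 0) (hmp : mp = 0)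
    (hwm : wm = 0) (hwp : wp = 0)
    (hhm : hm = ηm - Bm) (hhp : hp = ηp - Bp) :
    let hsm : ℝ := max 0 (ηm - max Bm Bp)
    let hsp : ℝ := max 0 (ηp - max Bm Bp)
    let msm : ℝ := hsm / hm * mm
    let msp : ℝ := hsp / hp * mp
    let wsm : ℝ := hsm / hm * wm
    let wsp : ℝ := hsp / hp * wp
    (1 / 2 : ℝ) • (Hflux g Xd Yd nx ny ηm msm wsm hsm + Hflux g Xd Yd nx ny ηp msp wsp hsp)
        - (α / 2) • ((ηp, msp, wsp) - (ηm, msm, wsm))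
        + (0, g * ηm * (hm - hsm) * nx, g * ηm * (hm - hsm) * ny)
      = Hflux g Xd Yd nx ny C 0 0 (C - Bm) := by
  subst hηm hηp hmm hmp hwm hwp hhm hhp
  simp only [mul_zero]
  exact wellBalanced_flux_reduces_to_interior_flux_general
    g Xd Yd nx ny ηp (ηp - Bm) (max 0 (ηp - max Bm Bp)) α
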